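/- (Consensus convergence to the centroid.) Let G be a connected simple undirected graph on n vertices with maximum degree Δ, let L be its graph Laplacian, let 0 < ε < 1/Δ, and let A = I_{2n} − ε(L ⊗ I₂). Then A^k converges, as k → ∞, to (1/n)(𝟙_n 𝟙_n^T ⊗ I₂); in particular, for every initial state x(0) ∈ ℝ^{2n}, the trajectory x(k) = A^k x(0) converges to 𝟙_n ⊗ x̄(0), where x̄(0) = (1/n)(𝟙_n^T ⊗ I₂) x(0) is the centroid of the initial positions. -/

import Mathlib

/-! The matrix is `A = P ⊗ I₂` with `P = I - ε L`, so `A ^ k = P ^ k ⊗ I₂` and it suffices to show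
that every entry of `P ^ k` tends to `1 / n`.

By Gershgorin's theorem every eigenvalue `μ` of the symmetric matrix `P` satisfies
`|μ - (1 - ε d)| ≤ ε d` for the degree `d` of some vertex, and `ε d < 1`, so `-1 < μ ≤ 1`.
Diagonalizing `P` orthogonally, `P ^ k` therefore converges to some `Q`. The limit satisfies
`P Q = Q`, that is `L Q = 0`; since the graph is connected, each column of `Q` is constant.
The columns of each `P ^ k` sum to `1`, because `𝟙ᵀ L = 0`, hence so do those of `Q`, and every entry
of `Q` equals `1 / n`. -/

open Matrix Kronecker

/-- The one-dimensional consensus matrix `I - ε L`. -/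
noncomputable def consensusMatrix {n : ℕ} (G : SimpleGraph (Fin n)) [DecidableRel G.Adj] (ε : ℝ) :
    Matrix (Fin n) (Fin n) ℝ := 1 - ε • G.lapMatrix ℝ

lemma consensusMatrix_isHermitian {n : ℕ} (G : SimpleGraph (Fin n)) [DecidableRel G.Adj] (ε : ℝ) :
    (consensusMatrix G ε).IsHermitian := by
  have h := G.isSymm_lapMatrix ℝ
  rw [Matrix.IsHermitian, conjTranspose_eq_transpose_of_trivial, consensusMatrix,
    transpose_sub, transpose_smul, transpose_one, h.eq]

/-- The Gershgorin disc of row `i` is centred at `1 - ε d_i` and has radius `ε d_i < 1`. -/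
lemma consensusMatrix_eigenvalue_bounds {n : ℕ} (G : SimpleGraph (Fin n)) [DecidableRel G.Adj]
    {ε : ℝ} (hε0 : 0 < ε) (hdeg : ∀ i, ε * G.degree i < 1) {μ : ℝ}
    (hμ : Module.End.HasEigenvalue (toLin' (consensusMatrix G ε)) μ) : -1 < μ ∧ μ ≤ 1 := by
  obtain ⟨i, hi⟩ := eigenvalue_mem_ball hμ
  have hdiag : consensusMatrix G ε i i = 1 - ε * G.degree i := by
    simp [consensusMatrix, SimpleGraph.lapMatrix, SimpleGraph.degMatrix]
  have hsum : ∑ j ∈ Finset.univ.erase i, ‖consensusMatrix G ε i j‖ = ε * G.degree i := by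
    have hoff : ∀ j ∈ Finset.univ.erase i,
        ‖consensusMatrix G ε i j‖ = ε * if G.Adj i j then 1 else 0 := by
      intro j hj
      have hij : i ≠ j := (Finset.ne_of_mem_erase hj).symm
      by_cases h : G.Adj i j <;>
        simp [consensusMatrix, SimpleGraph.lapMatrix, SimpleGraph.degMatrix, hij, h, hε0.le]
    rw [Finset.sum_congr rfl hoff, ← Finset.mul_sum, SimpleGraph.degree_eq_sum_if_adj,
      Finset.sum_erase]
    simp
  rw [hsum, hdiag, Metric.mem_closedBall, Real.dist_eq, abs_le] at hi
  have := hdeg i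
  constructor <;> linarith [hi.1, hi.2]

/-- The powers of a real symmetric matrix with spectrum in `(-1, 1]` converge. -/
lemma exists_tendsto_pow_of_eigenvalues {ι : Type*} [Fintype ι] [DecidableEq ι]
    {P : Matrix ι ι ℝ} (hP : P.IsHermitian)
    (hμ : ∀ μ, Module.End.HasEigenvalue (toLin' P) μ → -1 < μ ∧ μ ≤ 1) :
    ∃ Q, Filter.Tendsto (fun k => P ^ k) Filter.atTop (nhds Q) := by
  have hev : ∀ i, -1 < hP.eigenvalues i ∧ hP.eigenvalues i ≤ 1 := by
    intro i
    refine hμ _ ?_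
    rw [Module.End.hasEigenvalue_iff_mem_spectrum, spectrum_toLin']
    exact hP.eigenvalues_mem_spectrum_real i
  have hscalar : ∀ i, Filter.Tendsto (fun k => hP.eigenvalues i ^ k) Filter.atTop
      (nhds (if hP.eigenvalues i = 1 then 1 else 0)) := by
    intro i
    split_ifs with h
    · simp [h]
    · exact tendsto_pow_atTop_nhds_zero_of_abs_lt_one
        (abs_lt.2 ⟨(hev i).1, lt_of_le_of_ne (hev i).2 h⟩)
  have hdiag : Filter.Tendsto (fun k => diagonal (fun i => hP.eigenvalues i ^ k)) Filter.atTop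
      (nhds (diagonal fun i => if hP.eigenvalues i = 1 then (1 : ℝ) else 0)) :=
    (continuous_id.matrix_diagonal.tendsto _).comp (tendsto_pi_nhds.2 hscalar)
  have hpow : ∀ k, P ^ k = Unitary.conjStarAlgAut ℝ _ hP.eigenvectorUnitary
      (diagonal fun i => hP.eigenvalues i ^ k) := by
    intro k
    conv_lhs => rw [hP.spectral_theorem]
    rw [← map_pow, diagonal_pow]
    rfl
  simp_rw [hpow, Unitary.conjStarAlgAut_apply]
  exact ⟨_, (hdiag.const_mul _).mul_const _⟩

/-- Every entry of `(I - ε L) ^ k` tends to `1 / n` when `G` is connected. -/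
lemma consensusMatrix_pow_tendsto {n : ℕ} (G : SimpleGraph (Fin n)) [DecidableRel G.Adj]
    (hG : G.Connected) {ε : ℝ} (hε0 : 0 < ε) (hdeg : ∀ i, ε * G.degree i < 1) :
    Filter.Tendsto (fun k => consensusMatrix G ε ^ k) Filter.atTop
      (nhds (of fun _ _ => 1 / (n : ℝ))) := by
  set P := consensusMatrix G ε with hPdef
  obtain ⟨Q, hQ⟩ : ∃ Q, Filter.Tendsto (fun k => P ^ k) Filter.atTop (nhds Q) :=
    exists_tendsto_pow_of_eigenvalues (consensusMatrix_isHermitian G ε)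
    (fun μ => consensusMatrix_eigenvalue_bounds G hε0 hdeg)
  have hPQ : P * Q = Q := by
    refine tendsto_nhds_unique (hQ.const_mul P) ?_
    simpa only [← pow_succ', Function.comp_def] using hQ.comp (Filter.tendsto_add_atTop_nat 1)
  have hLQ : G.lapMatrix ℝ * Q = 0 := by
    have h : ε • (G.lapMatrix ℝ * Q) = 0 := by
      simpa [hPdef, consensusMatrix, sub_mul] using hPQ
    exact (smul_eq_zero.1 h).resolve_left hε0.ne'
  have hconst : ∀ i i' j, Q i j = Q i' j := by
    intro i i' j
    have h : G.lapMatrix ℝ *ᵥ (fun i => Q i j) = 0 := by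
      ext l
      exact congrFun (congrFun hLQ l) j
    exact (G.lapMatrix_mulVec_eq_zero_iff_forall_reachable.1 h) i i' (hG.preconnected i i')
  have hone : (1 : Fin n → ℝ) ᵥ* P = 1 := by
    rw [← mulVec_transpose, ← conjTranspose_eq_transpose_of_trivial,
      (consensusMatrix_isHermitian G ε).eq, consensusMatrix, sub_mulVec, smul_mulVec]
    have h := G.lapMatrix_mulVec_const_eq_zero (R := ℝ)
    change _ *ᵥ (1 : Fin n → ℝ) = 0 at h
    simp [h]
  have honek : ∀ k, (1 : Fin n → ℝ) ᵥ* P ^ k = 1 := by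
    intro k
    induction k with
    | zero => simp
    | succ k ih => rw [pow_succ, ← vecMul_vecMul, ih, hone]
  have honeQ : (1 : Fin n → ℝ) ᵥ* Q = 1 := by
    refine tendsto_nhds_unique
      (((continuous_const.matrix_vecMul continuous_id).tendsto Q).comp hQ) ?_
    simp [Function.comp_def, honek]
  have hQeq : Q = of fun _ _ => 1 / (n : ℝ) := by
    ext i j
    have h : ∑ l, Q l j = 1 := by
      simpa [vecMul, dotProduct] using congrFun honeQ j
    rw [Finset.sum_congr rfl fun l _ => hconst l i j] at h
    have hn : (n : ℝ) ≠ 0 := by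
      have := i.pos
      positivity
    rw [of_apply, eq_div_iff hn]
    simpa [mul_comm] using h
  exact hQeq ▸ hQ

/-- **Consensus convergence to the centroid.**
Let `G` be a connected simple undirected graph on `n` vertices with maximum degree `Δ`,
let `L` be its graph Laplacian, let `0 < ε < 1/Δ`, and let `A = I_{2n} − ε(L ⊗ I₂)`.
Then `A^k` converges, as `k → ∞`, to `(1/n)(𝟙_n 𝟙_nᵀ ⊗ I₂)`; in particular, for every
initial state `x(0) ∈ ℝ^{2n}`, the trajectory `x(k) = A^k x(0)` converges to
`𝟙_n ⊗ x̄(0)`, where `x̄(0) = (1/n)(𝟙_nᵀ ⊗ I₂) x(0)` is the centroid of the initial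
positions. -/
theorem consensus_converges_to_centroid
    (n : ℕ) (G : SimpleGraph (Fin n)) [DecidableRel G.Adj] (hG : G.Connected)
    (ε : ℝ) (hε0 : 0 < ε) (hε1 : ε < 1 / (G.maxDegree : ℝ))
    (L : Matrix (Fin n) (Fin n) ℝ)
    (hL : ∀ i j, L i j =
      if i = j then (G.degree i : ℝ) else if G.Adj i j then -1 else 0)
    (A : Matrix (Fin n × Fin 2) (Fin n × Fin 2) ℝ)
    (hA : A = 1 - ε • (L ⊗ₖ (1 : Matrix (Fin 2) (Fin 2) ℝ)))
    (J : Matrix (Fin n × Fin 2) (Fin n × Fin 2) ℝ)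
    (hJ : ∀ p q, J p q = (1 / (n : ℝ)) * (if p.2 = q.2 then 1 else 0)) :
    Filter.Tendsto (fun k => A ^ k) Filter.atTop (nhds J) ∧
      ∀ x0 : (Fin n × Fin 2) → ℝ,
        Filter.Tendsto (fun k => (A ^ k).mulVec x0) Filter.atTop
          (nhds (fun p => (1 / (n : ℝ)) * ∑ i, x0 (i, p.2))) := by
  have hdeg : ∀ i, ε * G.degree i < 1 := by
    intro i
    -- The upper bound on `ε` forces `Δ ≠ 0`, since `1 / 0 = 0`.
    have hΔ : 0 < (G.maxDegree : ℝ) := one_div_pos.1 (hε0.trans hε1)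
    have hle : (G.degree i : ℝ) ≤ G.maxDegree := by exact_mod_cast G.degree_le_maxDegree i
    exact (mul_le_mul_of_nonneg_left hle hε0.le).trans_lt ((lt_div_iff₀ hΔ).1 hε1)
  have hLlap : L = G.lapMatrix ℝ := by
    ext i j
    rw [hL]
    by_cases hij : i = j
    · subst hij
      simp [SimpleGraph.lapMatrix, SimpleGraph.degMatrix]
    · by_cases h : G.Adj i j <;>
        simp [SimpleGraph.lapMatrix, SimpleGraph.degMatrix, hij, h]
  have hAP : A = consensusMatrix G ε ⊗ₖ (1 : Matrix (Fin 2) (Fin 2) ℝ) := by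
    rw [hA, hLlap, consensusMatrix, ← smul_kronecker, ← one_kronecker_one]
    ext p q
    simp only [Matrix.sub_apply, kroneckerMap_apply, sub_mul]
  have hpow : ∀ k, A ^ k = (consensusMatrix G ε ^ k) ⊗ₖ (1 : Matrix (Fin 2) (Fin 2) ℝ) := by
    intro k
    induction k with
    | zero => simp
    | succ k ih => rw [pow_succ, ih, hAP, ← mul_kronecker_mul, ← pow_succ, mul_one]
  have hlim := consensusMatrix_pow_tendsto G hG hε0 hdeg
  have hAJ : Filter.Tendsto (fun k => A ^ k) Filter.atTop (nhds J) := by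
    refine tendsto_pi_nhds.2 fun p => tendsto_pi_nhds.2 fun q => ?_
    have h := tendsto_pi_nhds.1 (tendsto_pi_nhds.1 hlim p.1) q.1
    simpa only [hpow, hJ, kroneckerMap_apply, one_apply, of_apply] using
      h.mul_const (if p.2 = q.2 then (1 : ℝ) else 0)
  refine ⟨hAJ, fun x0 => ?_⟩
  have hJx : J *ᵥ x0 = fun p => (1 / (n : ℝ)) * ∑ i, x0 (i, p.2) := by
    ext p
    simp only [mulVec, dotProduct, hJ, Fintype.sum_prod_type, Finset.mul_sum]
    simp
  rw [← hJx]
  exact ((continuous_id.matrix_mulVec continuous_const).tendsto J).comp hAJ
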